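/- Let F be a field of characteristic 0 and R = F[x,y,z]/(f) a 2-dimensional isolated hypersurface singularity with Tjurina number τ. Then the torsion submodule of Ω²_{R/F} is isomorphic to Ext¹_R(Ω²_{R/F}, R), and both have length τ. -/

import Mathlib

open MvPolynomial CategoryTheory Opposite

/-- The length of a module, defined as the Krull dimension of its submodule lattice. -/
noncomputable def moduleLength (R M : Type) [CommRing R] [AddCommGroup M] [Module R M] :
    WithBot ℕ∞ :=
  Order.krullDim (Submodule R M)

/-- An ideal `I` has no `m`-socle: no element outside `I` is multiplied into `I` by `m`. -/
def Ideal.SocleFree {A : Type*} [CommRing A] (m I : Ideal A) : Prop :=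
  ∀ u, (∀ t ∈ m, t * u ∈ I) → u ∈ I

/-- Whether `A ⧸ (K + (a))` has an `m`-socle does not depend on the element `a ∈ m`
regular modulo `K`. -/
theorem Ideal.SocleFree.swap {A : Type*} [CommRing A] {m K : Ideal A} {a c : A}
    (hc : c ∈ m) (ha_reg : ∀ x, a * x ∈ K → x ∈ K) (hc_reg : ∀ x, c * x ∈ K → x ∈ K)
    (h : m.SocleFree (K ⊔ Ideal.span {c})) : m.SocleFree (K ⊔ Ideal.span {a}) := by
  intro u hu
  simp only [Ideal.SocleFree, Submodule.mem_sup, Ideal.mem_span_singleton'] at h hu ⊢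
  obtain ⟨k, hk, _, ⟨v, rfl⟩, hkv⟩ := hu c hc
  obtain ⟨k₂, hk₂, _, ⟨w₂, rfl⟩, hw₂⟩ := h v fun t ht => by
    obtain ⟨k₁, hk₁, _, ⟨w, rfl⟩, hw⟩ := hu t ht
    refine ⟨t * v - w * c, ha_reg _ ?_, w * c, ⟨w, rfl⟩, by ring⟩
    have : a * (t * v - w * c) = c * k₁ - t * k := by
      linear_combination t * hkv - c * hw
    rw [this]
    exact K.sub_mem (K.mul_mem_left _ hk₁) (K.mul_mem_left _ hk)
  refine ⟨u - w₂ * a, hc_reg _ ?_, w₂ * a, ⟨w₂, rfl⟩, by ring⟩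
  have : c * (u - w₂ * a) = k + a * k₂ := by linear_combination -hkv - a * hw₂
  rw [this]
  exact K.add_mem hk (K.mul_mem_left _ hk₂)

theorem Polynomial.Monic.mem_map_C_of_mul_mem {A : Type*} [CommRing A] (I : Ideal A)
    {q u : Polynomial A} (hq : q.Monic) (h : q * u ∈ I.map Polynomial.C) :
    u ∈ I.map Polynomial.C := by
  have key : ∀ p : Polynomial A, p ∈ I.map Polynomial.C ↔ p.map (Ideal.Quotient.mk I) = 0 := by
    intro p
    rw [Ideal.mem_map_C_iff, Polynomial.ext_iff]
    simp [Ideal.Quotient.eq_zero_iff_mem]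
  rw [key, Polynomial.map_mul, (hq.map _).mul_right_eq_zero_iff] at h
  exact (key u).2 h

section Univariate

variable {F : Type*} [Field F]

/-- Common divisors of nonzero polynomials in two distinct single variables are constants. -/
theorem MvPolynomial.isUnit_of_dvd_aeval_X {σ : Type*} {i j : σ} (hij : i ≠ j)
    {p q : Polynomial F} (hp : p ≠ 0) (hq : q ≠ 0) {d : MvPolynomial σ F}
    (hdp : d ∣ Polynomial.aeval (X i) p) (hdq : d ∣ Polynomial.aeval (X j) q) : IsUnit d := by
  classical
  have deg : ∀ (i k : σ) (p : Polynomial F), p ≠ 0 → d ∣ Polynomial.aeval (X i) p → k ≠ i →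
      d ≠ 0 ∧ d.degreeOf k = 0 := by
    intro i k p hp hd hk
    have hne : Polynomial.aeval (X i : MvPolynomial σ F) p ≠ 0 := fun h =>
      hp ((transcendental_iff.1 (transcendental_X F i)) p h)
    obtain ⟨c, hc⟩ := hd
    have hd0 : d ≠ 0 := by rintro rfl; simp [hc] at hne
    have hc0 : c ≠ 0 := by rintro rfl; simp [hc] at hne
    refine ⟨hd0, ?_⟩
    have hz : (Polynomial.aeval (X i : MvPolynomial σ F) p).degreeOf k = 0 := by
      rw [← Nat.le_zero, Polynomial.aeval_eq_sum_range]
      refine (degreeOf_sum_le _ _ _).trans (Finset.sup_le fun n _ => ?_)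
      rw [smul_eq_C_mul]
      refine (degreeOf_C_mul_le _ _ _).trans ((degreeOf_pow_le _ _ _).trans ?_)
      simp [degreeOf_X_of_ne hk]
    rw [hc, degreeOf_mul_eq hd0 hc0] at hz
    omega
  have hd0 := (deg i j p hp hdp hij.symm).1
  have hz : ∀ k, d.degreeOf k = 0 := by
    intro k
    by_cases hk : k = i
    · exact (deg j k q hq hdq (hk ▸ hij)).2
    · exact (deg i k p hp hdp hk).2
  have hC : d = C (d.coeff 0) := by
    rw [← totalDegree_eq_zero_iff_eq_C, totalDegree_eq_zero_iff]
    intro m hm x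
    exact Nat.le_zero.1 ((monomial_le_degreeOf x hm).trans (hz x).le)
  rw [hC] at hd0 ⊢
  exact (isUnit_iff_ne_zero.2 fun h => hd0 (by rw [h, C_0])).map C

/-- A maximal ideal of a polynomial ring contains a monic polynomial in each variable. -/
theorem MvPolynomial.exists_monic_aeval_X_mem {σ : Type*} [Finite σ]
    (m : Ideal (MvPolynomial σ F)) [m.IsMaximal] (i : σ) :
    ∃ p : Polynomial F, p.Monic ∧ Polynomial.aeval (X i) p ∈ m := by
  let _ : Field (MvPolynomial σ F ⧸ m) := Ideal.Quotient.field m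
  have : Module.Finite F (MvPolynomial σ F ⧸ m) := finite_of_finite_type_of_isJacobsonRing _ _
  obtain ⟨p, hp, hpx⟩ := Algebra.IsIntegral.isIntegral (R := F) (Ideal.Quotient.mk m (X i))
  refine ⟨p, hp, Ideal.Quotient.eq_zero_iff_mem.1 ?_⟩
  rw [← Ideal.Quotient.mkₐ_eq_mk F, ← Polynomial.aeval_algHom_apply]
  exact hpx

/-- A maximal ideal of `F[x, y, z]` is not associated to a complete intersection `(f, h)`. -/
theorem MvPolynomial.socleFree_of_prime {f h : MvPolynomial (Fin 3) F} (hf : Prime f)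
    (hfh : ¬ f ∣ h) (m : Ideal (MvPolynomial (Fin 3) F)) [m.IsMaximal] :
    m.SocleFree (Ideal.span {f} ⊔ Ideal.span {h}) := by
  obtain ⟨p₀, hp₀, hp₀m⟩ := exists_monic_aeval_X_mem m 0
  have main : ∀ i j : Fin 2, i ≠ j → ∀ p q : Polynomial F, p ≠ 0 → q ≠ 0 →
      Polynomial.aeval (X i.succ) p ∈ m → Polynomial.aeval (X j.succ) q ∈ m →
      ¬ f ∣ Polynomial.aeval (X i.succ) p →
      m.SocleFree (Ideal.span {f} ⊔ Ideal.span {h}) := by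
    intro i j hij p q hp hq hpm hqm hfp
    have hfreg : ∀ e, ¬ f ∣ e → ∀ x, e * x ∈ Ideal.span {f} → x ∈ Ideal.span {f} := by
      intro e he x hx
      rw [Ideal.mem_span_singleton] at hx ⊢
      exact (hf.dvd_or_dvd hx).resolve_left he
    have hcop : IsRelPrime (Polynomial.aeval (X i.succ : MvPolynomial (Fin 3) F) p)
        (Polynomial.aeval (X j.succ) q) := fun d hdp hdq =>
      isUnit_of_dvd_aeval_X (by simpa using hij) hp hq hdp hdq
    refine Ideal.SocleFree.swap hpm (hfreg h hfh) (hfreg _ hfp) ?_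
    rw [sup_comm]
    refine Ideal.SocleFree.swap hqm ?_ ?_ ?_
    · intro x hx
      rw [Ideal.mem_span_singleton] at hx ⊢
      exact ((hf.irreducible.isRelPrime_iff_not_dvd.2 hfp).symm).dvd_of_dvd_mul_left hx
    · intro x hx
      rw [Ideal.mem_span_singleton] at hx ⊢
      exact hcop.dvd_of_dvd_mul_left hx
    · intro u hu
      have hu := hu _ hp₀m
      set E := (finSuccEquiv F 2).toRingEquiv
      have hE : ∀ (k : Fin 2) (r : Polynomial F), E (Polynomial.aeval (X k.succ) r) =
          Polynomial.C (Polynomial.aeval (X k) r) := by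
        intro k r
        change (finSuccEquiv F 2).toAlgHom _ =
          (Polynomial.CAlgHom : MvPolynomial (Fin 2) F →ₐ[F] Polynomial (MvPolynomial (Fin 2) F)) _
        rw [← Polynomial.aeval_algHom_apply, ← Polynomial.aeval_algHom_apply]
        simp [finSuccEquiv_X_succ]
      have hE0 : (E (Polynomial.aeval (X 0) p₀)).Monic := by
        have : E (Polynomial.aeval (X 0) p₀) = p₀.map (algebraMap F (MvPolynomial (Fin 2) F)) := by
          change (finSuccEquiv F 2).toAlgHom _ = _
          rw [← Polynomial.aeval_algHom_apply]
          have hX : (finSuccEquiv F 2).toAlgHom (X 0) = Polynomial.X := finSuccEquiv_X_zero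
          rw [hX, Polynomial.aeval_X_left_eq_map]
        rw [this]
        exact hp₀.map _
      rw [← Ideal.span_union, Set.singleton_union] at hu ⊢
      have hmem : ∀ x, x ∈ Ideal.span {Polynomial.aeval (X i.succ) p,
          Polynomial.aeval (X j.succ) q} ↔ E x ∈ (Ideal.span {Polynomial.aeval (X i) p,
            Polynomial.aeval (X j) q}).map Polynomial.C := by
        intro x
        rw [Ideal.map_span, Set.image_pair, ← hE, ← hE, ← Set.image_pair, ← Ideal.map_span]
        exact (Ideal.mem_map_of_equiv E _).trans ⟨fun ⟨y, hy, e⟩ => E.injective e ▸ hy,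
          fun hx => ⟨x, hx, rfl⟩⟩ |>.symm
      rw [hmem] at hu ⊢
      rw [map_mul] at hu
      exact hE0.mem_map_C_of_mul_mem _ hu
  obtain ⟨p₁, hp₁, hp₁m⟩ := exists_monic_aeval_X_mem m 1
  obtain ⟨p₂, hp₂, hp₂m⟩ := exists_monic_aeval_X_mem m 2
  by_cases hd : f ∣ Polynomial.aeval (X 1) p₁
  · refine main 1 0 (by decide) p₂ p₁ hp₂.ne_zero hp₁.ne_zero hp₂m hp₁m fun hd' => ?_
    exact hf.not_isUnit (isUnit_of_dvd_aeval_X (by decide) hp₁.ne_zero hp₂.ne_zero hd hd')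
  · exact main 0 1 (by decide) p₁ p₂ hp₁.ne_zero hp₂.ne_zero hp₁m hp₂m hd

end Univariate

theorem Fin.eq_or_eq_add_one_or_eq_add_two (i j : Fin 3) :
    j = i ∨ j = i + 1 ∨ j = i + 2 := by
  revert i j
  decide

theorem IsFiniteLength.isMaximal_of_le {R : Type*} [CommRing R] {J q : Ideal R} [q.IsPrime]
    (hJ : IsFiniteLength R (R ⧸ J)) (hq : J ≤ q) : q.IsMaximal := by
  have : IsArtinian R (R ⧸ J) := (isFiniteLength_iff_isNoetherian_isArtinian.1 hJ).2
  have : IsArtinianRing (R ⧸ J) := isArtinian_of_tower R this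
  have hle : RingHom.ker (Ideal.Quotient.mk J) ≤ q := by rwa [Ideal.mk_ker]
  have := Ideal.map_isPrime_of_surjective Ideal.Quotient.mk_surjective hle
  have hmax : (q.map (Ideal.Quotient.mk J)).IsMaximal := IsArtinianRing.isMaximal_of_isPrime _
  have := Ideal.comap_isMaximal_of_surjective _ (Ideal.Quotient.mk_surjective (I := J))
    (K := q.map (Ideal.Quotient.mk J))
  rwa [Ideal.comap_map_of_surjective _ Ideal.Quotient.mk_surjective, ← RingHom.ker_eq_comap_bot,
    sup_eq_left.2 hle] at this

theorem isFiniteLength_quotient_of_isMaximal {R : Type*} [CommRing R] [IsNoetherianRing R]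
    {I : Ideal R} (h : ∀ q : Ideal R, q.IsPrime → I ≤ q → q.IsMaximal) :
    IsFiniteLength R (R ⧸ I) := by
  have : Ring.KrullDimLE 0 (R ⧸ I) := by
    refine Ring.krullDimLE_zero_iff.2 fun q hq => ?_
    have := h (q.comap (Ideal.Quotient.mk I)) inferInstance (by
      conv_lhs => rw [← Ideal.mk_ker (I := I), RingHom.ker_eq_comap_bot]
      exact Ideal.comap_mono bot_le)
    exact Ideal.isMaximal_of_isIntegral_of_isMaximal_comap (R := R) q this
  have : IsArtinianRing (R ⧸ I) := isArtinianRing_iff_krullDimLE_zero.2 this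
  have : IsArtinian R (R ⧸ I) :=
    isArtinian_of_surjective_algebraMap (R := R ⧸ I) Ideal.Quotient.mk_surjective
  exact isFiniteLength_iff_isNoetherian_isArtinian.2 ⟨inferInstance, this⟩

section Hypersurface

variable {F : Type*} [Field F] {f : MvPolynomial (Fin 3) F} {R : Type*} [CommRing R]
  [Algebra F R] {σ : MvPolynomial (Fin 3) F →ₐ[F] R}

theorem not_isField_of_ker_eq_span_prime (hf : Prime f) (hσ : Function.Surjective σ)
    (hker : RingHom.ker σ = Ideal.span {f}) : ¬ IsField R := by
  intro hR
  let _ := hR.toField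
  have hmax : (RingHom.ker σ).IsMaximal := RingHom.ker_isMaximal_of_surjective _ hσ
  rw [hker] at hmax
  obtain ⟨p₁, hp₁, h₁⟩ := exists_monic_aeval_X_mem (Ideal.span {f}) 1
  obtain ⟨p₂, hp₂, h₂⟩ := exists_monic_aeval_X_mem (Ideal.span {f}) 2
  rw [Ideal.mem_span_singleton] at h₁ h₂
  exact hf.not_isUnit (isUnit_of_dvd_aeval_X (by decide) hp₁.ne_zero hp₂.ne_zero h₁ h₂)

/-- A maximal ideal of the surface `R` is not associated to a nonzero principal ideal. -/
theorem not_isAssociatedPrime_of_isMaximal (hf : Prime f) (hσ : Function.Surjective σ)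
    (hker : RingHom.ker σ = Ideal.span {f}) {a : R} (ha : a ≠ 0) (q : Ideal R) [q.IsMaximal] :
    ¬ IsAssociatedPrime q (R ⧸ Ideal.span {a}) := by
  intro hq
  have : IsNoetherianRing R := isNoetherianRing_of_surjective _ _ σ.toRingHom hσ
  obtain ⟨hqp, x, hx⟩ := Submodule.isAssociatedPrime_iff.1 hq
  obtain ⟨x, rfl⟩ := Ideal.Quotient.mk_surjective x
  obtain ⟨u, rfl⟩ := hσ x
  obtain ⟨h, rfl⟩ := hσ a
  have hfh : ¬ f ∣ h := fun hd => ha (by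
    rwa [← Ideal.mem_span_singleton, ← hker, RingHom.mem_ker] at hd)
  have hmem : ∀ v, σ v ∈ Ideal.span {σ h} ↔ v ∈ Ideal.span {f} ⊔ Ideal.span {h} := by
    intro v
    rw [← hker, RingHom.ker_eq_comap_bot, sup_comm, ← Ideal.comap_map_of_surjective _ hσ,
      Ideal.mem_comap, Ideal.map_span, Set.image_singleton]
  have : (q.comap σ).IsMaximal := Ideal.comap_isMaximal_of_surjective _ hσ
  have hu : u ∈ Ideal.span {f} ⊔ Ideal.span {h} :=
    socleFree_of_prime hf hfh (q.comap σ) u fun t ht => by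
      rw [Ideal.mem_comap, hx, Submodule.mem_colon_singleton] at ht
      rw [← hmem, map_mul, ← Ideal.Quotient.eq_zero_iff_mem]
      simpa [Algebra.smul_def] using ht
  rw [← hmem, ← Ideal.Quotient.eq_zero_iff_mem] at hu
  apply hqp.ne_top
  rw [hx, hu]
  ext; simp

/-- Krull dimension two: a prime strictly above a nonzero prime is maximal. -/
theorem isMaximal_of_bot_lt_of_lt (hf : Prime f) (hσ : Function.Surjective σ)
    (hker : RingHom.ker σ = Ideal.span {f}) [IsDomain R] {p q : Ideal R} [p.IsPrime] [q.IsPrime]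
    (hp : ⊥ < p) (hpq : p < q) : q.IsMaximal := by
  obtain ⟨m, hm, hqm⟩ := Ideal.exists_le_maximal q (Ideal.IsPrime.ne_top ‹_›)
  rcases hqm.eq_or_lt with rfl | hqm
  · exact hm
  exfalso
  let c : PrimeSpectrum R → PrimeSpectrum (MvPolynomial (Fin 3) F) :=
    PrimeSpectrum.comap σ.toRingHom
  have hc : StrictMono c := by
    refine Monotone.strictMono_of_injective (fun a b h => Ideal.comap_mono h) ?_
    exact PrimeSpectrum.comap_injective_of_surjective _ hσ
  have h0 : (⊥ : PrimeSpectrum (MvPolynomial (Fin 3) F)) < c ⊥ := by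
    rw [bot_lt_iff_ne_bot]
    intro h
    have h := congrArg PrimeSpectrum.asIdeal h
    have hfm : f ∈ (c ⊥).asIdeal := by
      change σ f ∈ (⊥ : Ideal R)
      rw [Ideal.mem_bot, ← RingHom.mem_ker, hker]
      exact Ideal.mem_span_singleton_self f
    rw [h] at hfm
    exact hf.ne_zero hfm
  let l : LTSeries (PrimeSpectrum (MvPolynomial (Fin 3) F)) :=
    RelSeries.fromListIsChain
      [⊥, c ⊥, c ⟨p, inferInstance⟩, c ⟨q, inferInstance⟩, c ⟨m, hm.isPrime⟩] (by simp) (by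
        simp only [List.isChain_cons_cons, List.isChain_singleton, and_true]
        exact ⟨h0, hc hp, hc hpq, hc hqm⟩)
  have hl := Order.LTSeries.length_le_krullDim l
  change _ ≤ ringKrullDim _ at hl
  rw [MvPolynomial.ringKrullDim_of_isNoetherianRing, ringKrullDim_eq_zero_of_field] at hl
  have : l.length = 4 := rfl
  rw [this] at hl
  norm_num at hl

/-- If three elements of the surface `R` cut out a scheme of finite length, then some two
`F`-linear combinations of them form a regular sequence with quotient of finite length. -/
theorem exists_regular_pair [Infinite F] [IsDomain R] (hf : Prime f) (hσ : Function.Surjective σ)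
    (hker : RingHom.ker σ = Ideal.span {f}) (g : Fin 3 → R)
    (hfin : IsFiniteLength R (R ⧸ Ideal.span (Set.range g))) :
    ∃ (i : Fin 3) (t : R), g i ≠ 0 ∧
      (∀ x, (g (i + 1) + t * g (i + 2)) * x ∈ Ideal.span {g i} → x ∈ Ideal.span {g i}) ∧
      IsFiniteLength R (R ⧸ Ideal.span {g i, g (i + 1) + t * g (i + 2)}) := by
  have : IsNoetherianRing R := isNoetherianRing_of_surjective _ _ σ.toRingHom hσ
  obtain ⟨i, hi⟩ : ∃ i, g i ≠ 0 := by
    by_contra! h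
    have hbot : Ideal.span (Set.range g) ≤ (⊥ : Ideal R) :=
      Ideal.span_le.2 (by rintro _ ⟨i, rfl⟩; simp [h])
    have := hfin.isMaximal_of_le hbot
    exact not_isField_of_ker_eq_span_prime hf hσ hker
      (Ring.isField_iff_maximal_bot.2 this)
  let S := associatedPrimes R (R ⧸ Ideal.span {g i})
  have hS : S.Finite := associatedPrimes.finite R _
  have hmem : ∀ q ∈ S, g i ∈ q := by
    intro q hq
    have := IsAssociatedPrime.annihilator_le hq
    rw [Submodule.annihilator_top, Ideal.annihilator_quotient] at this
    exact this (Ideal.mem_span_singleton_self _)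
  have hbad : ∀ q ∈ S, {c : F | g (i + 1) + algebraMap F R c * g (i + 2) ∈ q}.Subsingleton := by
    intro q hq c hc d hd
    by_contra hcd
    have hqp : q.IsPrime := hq.isPrime
    have h2 : g (i + 2) ∈ q := by
      have h := q.sub_mem hc hd
      have : g (i + 1) + algebraMap F R c * g (i + 2) - (g (i + 1) + algebraMap F R d * g (i + 2))
          = algebraMap F R (c - d) * g (i + 2) := by rw [map_sub]; ring
      rw [this] at h
      exact (q.unit_mul_mem_iff_mem ((isUnit_iff_ne_zero.2 (sub_ne_zero.2 hcd)).map _)).1 h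
    have h1 : g (i + 1) ∈ q := (Ideal.add_mem_iff_left _ (q.mul_mem_left _ h2)).1 hc
    have hle : Ideal.span (Set.range g) ≤ q := by
      refine Ideal.span_le.2 ?_
      rintro _ ⟨j, rfl⟩
      have h0 := hmem q hq
      obtain rfl | rfl | rfl := Fin.eq_or_eq_add_one_or_eq_add_two i j
      exacts [h0, h1, h2]
    have := hfin.isMaximal_of_le hle
    exact not_isAssociatedPrime_of_isMaximal hf hσ hker hi q hq
  obtain ⟨c, hc⟩ := (hS.biUnion fun q hq => (hbad q hq).finite).exists_notMem
  simp only [Set.mem_iUnion, not_exists, Set.mem_ofPred_eq] at hc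
  refine ⟨i, algebraMap F R c, hi, fun x hx => ?_, ?_⟩
  · by_contra hx0
    have : g (i + 1) + algebraMap F R c * g (i + 2) ∈ ⋃ q ∈ S, (q : Set R) := by
      rw [biUnion_associatedPrimes_eq_zero_divisors]
      refine ⟨Ideal.Quotient.mk _ x, fun h => hx0 (Ideal.Quotient.eq_zero_iff_mem.1 h), ?_⟩
      rw [← Ideal.Quotient.eq_zero_iff_mem] at hx
      simpa [Algebra.smul_def] using hx
    obtain ⟨q, hq, hqm⟩ := Set.mem_iUnion₂.1 this
    exact hc q hq hqm
  · refine isFiniteLength_quotient_of_isMaximal fun q hqp hq => ?_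
    have h1 : g i ∈ q := hq (Ideal.subset_span (by simp))
    have h2 : g (i + 1) + algebraMap F R c * g (i + 2) ∈ q := hq (Ideal.subset_span (by simp))
    obtain ⟨p, hp, hpq⟩ := Ideal.exists_minimalPrimes_le
      ((Ideal.span_singleton_le_iff_mem q).2 h1)
    have hpS : p ∈ S := by
      apply Module.associatedPrimes.minimalPrimes_annihilator_subset_associatedPrimes
      rwa [Ideal.annihilator_quotient]
    have := hp.1.1
    refine isMaximal_of_bot_lt_of_lt hf hσ hker (p := p) ?_ (lt_of_le_of_ne hpq ?_)
    · rw [bot_lt_iff_ne_bot]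
      rintro rfl
      exact hi (hmem _ hpS)
    · rintro rfl
      exact hc _ hpS h2

end Hypersurface

section Koszul

open Matrix

variable {R : Type*} [CommRing R] (g : Fin 3 → R)

/-- The vectors orthogonal to `g`: the `2`-cocycles of the Koszul complex of `g`. -/
def koszulCocycles : Submodule R (Fin 3 → R) := LinearMap.ker (dotProductEquiv R (Fin 3) g)

/-- The multiples `g ⨯₃ w` of `g`: the `2`-coboundaries of the Koszul complex of `g`. -/
def koszulCoboundaries : Submodule R (Fin 3 → R) := LinearMap.range (crossProduct g)

/-- The second cohomology of the Koszul complex of `g`. -/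
abbrev KoszulH2 : Type _ :=
  koszulCocycles g ⧸ (koszulCoboundaries g).submoduleOf (koszulCocycles g)

variable {g}

theorem mem_koszulCocycles {v : Fin 3 → R} : v ∈ koszulCocycles g ↔ g ⬝ᵥ v = 0 := Iff.rfl

theorem mem_koszulCoboundaries {v : Fin 3 → R} :
    v ∈ koszulCoboundaries g ↔ ∃ w, g ⨯₃ w = v := Iff.rfl

theorem dotProduct_eq_cyclic (a b : Fin 3 → R) (i : Fin 3) :
    a ⬝ᵥ b = a i * b i + a (i + 1) * b (i + 1) + a (i + 2) * b (i + 2) := by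
  fin_cases i <;> simp [dotProduct, Fin.sum_univ_three] <;> ring

theorem cross_apply_cyclic (a b : Fin 3 → R) (i : Fin 3) :
    (a ⨯₃ b) i = a (i + 1) * b (i + 2) - a (i + 2) * b (i + 1) := by
  fin_cases i <;> simp [cross_apply]

theorem mul_comm_of_cross_eq_zero {v : Fin 3 → R} (h : g ⨯₃ v = 0) (i j : Fin 3) :
    g i * v j = g j * v i := by
  have h : ∀ k, g (k + 1) * v (k + 2) - g (k + 2) * v (k + 1) = 0 := fun k => by
    rw [← cross_apply_cyclic, h, Pi.zero_apply]
  have h0 := h 0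
  have h1 := h 1
  have h2 := h 2
  fin_cases i <;> fin_cases j <;> simp at h0 h1 h2 ⊢ <;> grind

/-- Exactness of the Koszul complex of `g` in degree one, when some entry of `g` and a combination
of the two other ones form a regular sequence. -/
theorem exists_eq_smul_of_cross_eq_zero [IsDomain R] {i : Fin 3} {t : R} (hi : g i ≠ 0)
    (hreg : ∀ x, (g (i + 1) + t * g (i + 2)) * x ∈ Ideal.span {g i} → x ∈ Ideal.span {g i})
    {v : Fin 3 → R} (h : g ⨯₃ v = 0) : ∃ u : R, v = u • g := by
  have hc := mul_comm_of_cross_eq_zero h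
  obtain ⟨u, hu⟩ := Ideal.mem_span_singleton'.1 (hreg (v i) (Ideal.mem_span_singleton'.2
    ⟨v (i + 1) + t * v (i + 2), by
      linear_combination hc i (i + 1) + t * hc i (i + 2)⟩))
  refine ⟨u, funext fun j => mul_left_cancel₀ hi ?_⟩
  rw [Pi.smul_apply, smul_eq_mul, hc i j, ← hu]
  ring

theorem koszulCoboundaries_le : koszulCoboundaries g ≤ koszulCocycles g := by
  rintro _ ⟨w, rfl⟩
  exact dot_self_cross g w

/-- The torsion submodule of the cokernel of `g ⨯₃ ·` is the second Koszul cohomology. -/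
noncomputable def torsionEquivKoszulH2 [IsDomain R] (hg : g ≠ 0) :
    Submodule.torsion R ((Fin 3 → R) ⧸ koszulCoboundaries g) ≃ₗ[R] KoszulH2 g := by
  have hker : LinearMap.ker ((koszulCoboundaries g).mkQ ∘ₗ (koszulCocycles g).subtype) =
      (koszulCoboundaries g).submoduleOf (koszulCocycles g) := by
    rw [LinearMap.ker_comp, Submodule.ker_mkQ]
    rfl
  have hrange : LinearMap.range ((koszulCoboundaries g).mkQ ∘ₗ (koszulCocycles g).subtype) =
      Submodule.torsion R ((Fin 3 → R) ⧸ koszulCoboundaries g) := by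
    ext x
    constructor
    · rintro ⟨⟨v, hv⟩, rfl⟩
      obtain ⟨i, hi⟩ := Function.ne_iff.1 hg
      refine (Submodule.mem_torsion_iff _).2 ⟨⟨g i, mem_nonZeroDivisors_of_ne_zero hi⟩, ?_⟩
      change g i • (koszulCoboundaries g).mkQ v = 0
      rw [← map_smul, Submodule.mkQ_apply, Submodule.Quotient.mk_eq_zero]
      refine ⟨v ⨯₃ Pi.single i 1, ?_⟩
      rw [mem_koszulCocycles] at hv
      rw [cross_cross_eq_smul_sub_smul', dotProduct_comm v g, hv]
      simp
    · intro hx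
      obtain ⟨⟨a, ha⟩, hax⟩ := (Submodule.mem_torsion_iff _).1 hx
      obtain ⟨v, rfl⟩ := (koszulCoboundaries g).mkQ_surjective x
      change a • (koszulCoboundaries g).mkQ v = 0 at hax
      rw [← map_smul, Submodule.mkQ_apply, Submodule.Quotient.mk_eq_zero] at hax
      have := koszulCoboundaries_le hax
      rw [mem_koszulCocycles, dotProduct_smul, smul_eq_mul,
        mul_eq_zero_iff_left (nonZeroDivisors.ne_zero ha)] at this
      exact ⟨⟨v, this⟩, rfl⟩
  exact ((Submodule.quotEquivOfEq _ _ hker.symm).trans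
    ((LinearMap.quotKerEquivRange _).trans (LinearEquiv.ofEq _ _ hrange))).symm

theorem LinearMap.length_ker_eq_length_quotient_range {M : Type*} [AddCommGroup M] [Module R M]
    (hM : IsFiniteLength R M) (φ : M →ₗ[R] M) :
    Module.length R (LinearMap.ker φ) = Module.length R (M ⧸ LinearMap.range φ) := by
  have h₁ := Module.length_eq_add_of_exact (LinearMap.ker φ).subtype φ.rangeRestrict
    (Submodule.injective_subtype _) φ.surjective_rangeRestrict (by
      rw [LinearMap.exact_iff, LinearMap.ker_rangeRestrict, Submodule.range_subtype])
  have h₂ := Module.length_eq_add_of_exact (LinearMap.range φ).subtype (LinearMap.range φ).mkQ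
    (Submodule.injective_subtype _) (Submodule.mkQ_surjective _)
    (LinearMap.exact_subtype_mkQ _)
  have hne : Module.length R (LinearMap.range φ) ≠ ⊤ := by
    intro h
    rw [h, top_add] at h₂
    exact Module.length_ne_top_iff.2 hM h₂
  rw [h₁, add_comm] at h₂
  exact ENat.add_right_injective_of_ne_top hne h₂

/-- If two combinations of the entries of `g` form a regular sequence with quotient of finite
length, then the second Koszul cohomology of `g` has the same length as `R ⧸ (g)`. -/
theorem length_koszulH2 [IsDomain R] {i : Fin 3} {t : R} (hi : g i ≠ 0)
    (hreg : ∀ x, (g (i + 1) + t * g (i + 2)) * x ∈ Ideal.span {g i} → x ∈ Ideal.span {g i})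
    (hfin : IsFiniteLength R (R ⧸ Ideal.span {g i, g (i + 1) + t * g (i + 2)})) :
    Module.length R (KoszulH2 g) = Module.length R (R ⧸ Ideal.span (Set.range g)) := by
  set I := Ideal.span {g i, g (i + 1) + t * g (i + 2)} with hI
  have add_two_add_one : i + 2 + 1 = i :=
    (by decide : ∀ i : Fin 3, i + 2 + 1 = i) i
  have add_two_add_two : i + 2 + 2 = i + 1 :=
    (by decide : ∀ i : Fin 3, i + 2 + 2 = i + 1) i
  have add_one_add_one : i + 1 + 1 = i + 2 :=
    (by decide : ∀ i : Fin 3, i + 1 + 1 = i + 2) i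
  have add_one_add_two : i + 1 + 2 = i :=
    (by decide : ∀ i : Fin 3, i + 1 + 2 = i) i
  let φ : (R ⧸ I) →ₗ[R] (R ⧸ I) := g (i + 2) • LinearMap.id
  let ρ : koszulCocycles g →ₗ[R] (R ⧸ I) := I.mkQ ∘ₗ
    (LinearMap.proj (i + 2) - t • LinearMap.proj (i + 1)) ∘ₗ (koszulCocycles g).subtype
  have hρ : ∀ v, ρ v = I.mkQ (v.1 (i + 2) - t * v.1 (i + 1)) := fun v => rfl
  have hmem : ∀ x, I.mkQ x = 0 ↔
      ∃ s r, s * g i + r * (g (i + 1) + t * g (i + 2)) = x := fun x => by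
    rw [Submodule.mkQ_apply, Submodule.Quotient.mk_eq_zero, hI, Ideal.mem_span_pair]
  have hker : LinearMap.ker ρ = (koszulCoboundaries g).submoduleOf (koszulCocycles g) := by
    ext ⟨v, hv⟩
    rw [LinearMap.mem_ker, hρ, hmem, Submodule.submoduleOf, Submodule.mem_comap,
      Submodule.subtype_apply, mem_koszulCoboundaries]
    rw [mem_koszulCocycles, dotProduct_eq_cyclic _ _ i] at hv
    constructor
    · rintro ⟨s, r, hsr⟩
      dsimp only at hsr
      obtain ⟨u, hu⟩ := Ideal.mem_span_singleton'.1 (hreg (v (i + 1) + r * g (i + 2))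
        (Ideal.mem_span_singleton'.2 ⟨-(v i + s * g (i + 2)), by
          linear_combination -hv - g (i + 2) * hsr⟩))
      have hvi : v i = -(u * (g (i + 1) + t * g (i + 2))) - s * g (i + 2) := by
        apply mul_left_cancel₀ hi
        linear_combination hv + g (i + 2) * hsr + (g (i + 1) + t * g (i + 2)) * hu
      let w : Fin 3 → R := fun j => if j = i then -r else if j = i + 1 then s + t * u else -u
      have w₀ : w i = -r := by simp [w]
      have w₁ : w (i + 1) = s + t * u := by simp [w]
      have w₂ : w (i + 2) = -u := by simp [w]
      refine ⟨w, funext fun j => ?_⟩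
      rw [cross_apply_cyclic]
      obtain rfl | rfl | rfl := Fin.eq_or_eq_add_one_or_eq_add_two i j
      · rw [w₁, w₂]; linear_combination -hvi
      · rw [add_one_add_one, add_one_add_two, w₀, w₂]; linear_combination hu
      · rw [add_two_add_one, add_two_add_two, w₀, w₁]
        linear_combination hsr + t * hu
    · rintro ⟨w, rfl⟩
      refine ⟨w (i + 1) + t * w (i + 2), -w i, ?_⟩
      simp only [cross_apply_cyclic, add_one_add_one, add_one_add_two, add_two_add_one,
        add_two_add_two]
      ring
  have hrange : LinearMap.range ρ = LinearMap.ker φ := by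
    ext x
    obtain ⟨x, rfl⟩ := I.mkQ_surjective x
    have hφ : I.mkQ x ∈ LinearMap.ker φ ↔ I.mkQ (g (i + 2) * x) = 0 := Iff.rfl
    rw [hφ, hmem]
    constructor
    · rintro ⟨⟨v, hv⟩, hvx⟩
      rw [hρ, ← sub_eq_zero, ← map_sub, hmem] at hvx
      obtain ⟨s, r, hsr⟩ := hvx
      dsimp only at hsr
      rw [mem_koszulCocycles, dotProduct_eq_cyclic _ _ i] at hv
      refine ⟨-v i - g (i + 2) * s, -v (i + 1) - g (i + 2) * r, ?_⟩
      linear_combination -hv - g (i + 2) * hsr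
    · rintro ⟨s, r, hsr⟩
      let v : Fin 3 → R := fun j => if j = i then -s else if j = i + 1 then -r else x - t * r
      have v₀ : v i = -s := by simp [v]
      have v₁ : v (i + 1) = -r := by simp [v]
      have v₂ : v (i + 2) = x - t * r := by simp [v]
      refine ⟨⟨v, ?_⟩, ?_⟩
      · rw [mem_koszulCocycles, dotProduct_eq_cyclic _ _ i, v₀, v₁, v₂]
        linear_combination -hsr
      · rw [hρ]
        dsimp only
        rw [v₁, v₂]
        congr 1
        ring
  have hle : I ≤ Ideal.span (Set.range g) := by
    rw [hI, Ideal.span_le, Set.insert_subset_iff, Set.singleton_subset_iff]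
    have h : ∀ j, g j ∈ Ideal.span (Set.range g) := fun j => Ideal.subset_span ⟨j, rfl⟩
    exact ⟨h _, Ideal.add_mem _ (h _) (Ideal.mul_mem_left _ _ (h _))⟩
  have hcoker : LinearMap.range φ = Submodule.map I.mkQ (Ideal.span (Set.range g)) := by
    apply le_antisymm
    · rintro _ ⟨x, rfl⟩
      obtain ⟨x, rfl⟩ := I.mkQ_surjective x
      exact ⟨g (i + 2) * x, Ideal.mul_mem_right _ _ (Ideal.subset_span ⟨_, rfl⟩), rfl⟩
    · rw [Ideal.span, Submodule.map_span, Submodule.span_le]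
      rintro _ ⟨_, ⟨j, rfl⟩, rfl⟩
      obtain rfl | rfl | rfl := Fin.eq_or_eq_add_one_or_eq_add_two i j
      · rw [(hmem _).2 ⟨1, 0, by ring⟩]
        exact zero_mem _
      · refine ⟨I.mkQ (-t), ?_⟩
        change I.mkQ (g (i + 2) * -t) = _
        rw [← sub_eq_zero, ← map_sub, hmem]
        exact ⟨0, -1, by ring⟩
      · refine ⟨I.mkQ 1, ?_⟩
        change I.mkQ (g (i + 2) * 1) = _
        rw [mul_one]
  rw [← (Submodule.quotEquivOfEq _ _ hker).length_eq, ρ.quotKerEquivRange.length_eq, hrange,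
    LinearMap.length_ker_eq_length_quotient_range hfin, hcoker]
  exact (Submodule.quotientQuotientEquivQuotient I _ hle).length_eq

end Koszul

section Omega

open Matrix KaehlerDifferential

variable {F R : Type*} [Field F] [CommRing R] [Algebra F R]
  (σ : MvPolynomial (Fin 3) F →ₐ[F] R)

/-- The image under `σ` of the gradient of a polynomial. -/
noncomputable def gradientAlong (p : MvPolynomial (Fin 3) F) : Fin 3 → R := fun i => σ (pderiv i p)

theorem gradientAlong_add (p q : MvPolynomial (Fin 3) F) :
    gradientAlong σ (p + q) = gradientAlong σ p + gradientAlong σ q := by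
  ext i; simp [gradientAlong]

theorem gradientAlong_smul (c : F) (p : MvPolynomial (Fin 3) F) :
    gradientAlong σ (c • p) = c • gradientAlong σ p := by
  ext i; simp [gradientAlong]

theorem gradientAlong_mul (p q : MvPolynomial (Fin 3) F) :
    gradientAlong σ (p * q) = σ p • gradientAlong σ q + σ q • gradientAlong σ p := by
  ext i; simp [gradientAlong]

theorem gradientAlong_C (c : F) : gradientAlong σ (C c) = 0 := by
  ext i; simp [gradientAlong]

theorem gradientAlong_X (i : Fin 3) : gradientAlong σ (X i) = Pi.single i 1 := by
  ext j
  by_cases h : j = i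
  · subst h; simp [gradientAlong]
  · simp [gradientAlong, pderiv_X_of_ne (Ne.symm h), h]

/-- The map sending the standard basis to the differentials of the coordinate functions. -/
noncomputable def coordDifferential : (Fin 3 → R) →ₗ[R] Ω[R⁄F] :=
  Fintype.linearCombination R fun i => D F R (σ (X i))

theorem coordDifferential_single (i : Fin 3) :
    coordDifferential σ (Pi.single i 1) = D F R (σ (X i)) := by
  simp [coordDifferential]

theorem coordDifferential_gradientAlong (p : MvPolynomial (Fin 3) F) :
    coordDifferential σ (gradientAlong σ p) = D F R (σ p) := by
  induction p using MvPolynomial.induction_on with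
  | C c =>
    rw [gradientAlong_C, map_zero, ← MvPolynomial.algebraMap_eq, AlgHom.commutes,
      Derivation.map_algebraMap]
  | add p q hp hq => rw [gradientAlong_add, map_add, hp, hq, map_add, map_add]
  | mul_X p i hp =>
    rw [gradientAlong_mul, map_add, map_smul, map_smul, hp, gradientAlong_X, coordDifferential_single,
      map_mul, Derivation.leibniz]

variable {σ} {f : MvPolynomial (Fin 3) F}

theorem mkQ_gradientAlong_eq (hker : RingHom.ker σ = Ideal.span {f}) {p q : MvPolynomial (Fin 3) F}
    (h : σ p = σ q) :
    (R ∙ gradientAlong σ f).mkQ (gradientAlong σ p) = (R ∙ gradientAlong σ f).mkQ (gradientAlong σ q) := by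
  have hmem : p - q ∈ RingHom.ker σ := by rw [RingHom.mem_ker, map_sub, h, sub_self]
  rw [hker, Ideal.mem_span_singleton'] at hmem
  obtain ⟨a, ha⟩ := hmem
  have hf : σ f = 0 := by
    rw [← RingHom.mem_ker, hker]
    exact Ideal.mem_span_singleton_self f
  rw [← sub_eq_iff_eq_add.1 ha.symm |>.symm, gradientAlong_add, gradientAlong_mul, hf, zero_smul, add_zero,
    map_add, add_eq_right, Submodule.mkQ_apply, Submodule.Quotient.mk_eq_zero]
  exact Submodule.smul_mem _ _ (Submodule.mem_span_singleton_self _)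

/-- The gradient as a derivation of `R` with values in the conormal quotient. -/
noncomputable def gradientDerivation (hσ : Function.Surjective σ)
    (hker : RingHom.ker σ = Ideal.span {f}) :
    Derivation F R ((Fin 3 → R) ⧸ (R ∙ gradientAlong σ f)) :=
  Derivation.mk'
    { toFun := fun r => (R ∙ gradientAlong σ f).mkQ (gradientAlong σ (Function.surjInv hσ r))
      map_add' := fun a b => by
        rw [← map_add, ← gradientAlong_add]
        exact mkQ_gradientAlong_eq hker (by simp only [map_add, Function.surjInv_eq])
      map_smul' := fun c a => by
        rw [RingHom.id_apply, Submodule.mkQ_apply, Submodule.mkQ_apply,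
          ← Submodule.Quotient.mk_smul, ← gradientAlong_smul]
        exact mkQ_gradientAlong_eq hker (by simp only [map_smul, Function.surjInv_eq]) }
    fun a b => by
      change (R ∙ gradientAlong σ f).mkQ _ =
        a • (R ∙ gradientAlong σ f).mkQ _ + b • (R ∙ gradientAlong σ f).mkQ _
      rw [mkQ_gradientAlong_eq hker (p := Function.surjInv hσ (a * b))
        (q := Function.surjInv hσ a * Function.surjInv hσ b)
        (by simp only [map_mul, Function.surjInv_eq]), gradientAlong_mul, map_add, map_smul, map_smul,
        Function.surjInv_eq hσ, Function.surjInv_eq hσ]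

theorem gradientDerivation_apply (hσ : Function.Surjective σ)
    (hker : RingHom.ker σ = Ideal.span {f}) (p : MvPolynomial (Fin 3) F) :
    gradientDerivation hσ hker (σ p) = (R ∙ gradientAlong σ f).mkQ (gradientAlong σ p) :=
  mkQ_gradientAlong_eq hker (Function.surjInv_eq hσ _)

/-- The Kähler differentials of the hypersurface `f = 0` are `R³` modulo the gradient of `f`. -/
noncomputable def kaehlerEquiv (hσ : Function.Surjective σ)
    (hker : RingHom.ker σ = Ideal.span {f}) :
    ((Fin 3 → R) ⧸ (R ∙ gradientAlong σ f)) ≃ₗ[R] Ω[R⁄F] :=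
  LinearEquiv.ofLinearMap
    ((R ∙ gradientAlong σ f).liftQ (coordDifferential σ) (by
      rw [Submodule.span_singleton_le_iff_mem, LinearMap.mem_ker, coordDifferential_gradientAlong,
        (RingHom.mem_ker (f := σ)).1 (hker ▸ Ideal.mem_span_singleton_self f), map_zero]))
    (gradientDerivation hσ hker).liftKaehlerDifferential
    (by
      apply Derivation.liftKaehlerDifferential_unique
      ext r
      obtain ⟨p, rfl⟩ := hσ r
      simp [gradientDerivation_apply, coordDifferential_gradientAlong])
    (by
      refine Submodule.linearMap_qext _ (LinearMap.pi_ext' fun i => LinearMap.ext_ring ?_)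
      simp [coordDifferential_single, gradientDerivation_apply, gradientAlong_X])

end Omega

section ExteriorSquare

open Matrix

variable {R M : Type*} [CommRing R] [AddCommGroup M] [Module R M]

variable (R M) in
/-- The wedge product of two vectors as a bilinear map. -/
noncomputable def wedge : M →ₗ[R] M →ₗ[R] ⋀[R]^2 M :=
  LinearMap.mk₂ R (fun x y => exteriorPower.ιMulti R 2 ![x, y])
    (fun x x' y => by ext; simp [ExteriorAlgebra.ιMulti_apply, add_mul])
    (fun c x y => by ext; simp [ExteriorAlgebra.ιMulti_apply])
    (fun x y y' => by ext; simp [ExteriorAlgebra.ιMulti_apply, mul_add])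
    (fun c x y => by ext; simp [ExteriorAlgebra.ιMulti_apply])

theorem wedge_apply (x y : M) : wedge R M x y = exteriorPower.ιMulti R 2 ![x, y] := rfl

theorem wedge_self (x : M) : wedge R M x x = 0 := by
  ext; simp [wedge_apply, ExteriorAlgebra.ιMulti_apply]

theorem wedge_swap (x y : M) : wedge R M x y = -wedge R M y x := by
  have h := wedge_self (R := R) (x + y)
  simp only [map_add, LinearMap.add_apply, wedge_self, zero_add, add_zero] at h
  exact eq_neg_of_add_eq_zero_right h

/-- The linear map sending `a ⨯₃ b` to `π a ∧ π b`. -/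
noncomputable def crossToWedge (π : (Fin 3 → R) →ₗ[R] M) : (Fin 3 → R) →ₗ[R] ⋀[R]^2 M :=
  Fintype.linearCombination R fun i =>
    wedge R M (π (Pi.single (i + 1) 1)) (π (Pi.single (i + 2) 1))

theorem crossToWedge_cross (π : (Fin 3 → R) →ₗ[R] M) (a b : Fin 3 → R) :
    crossToWedge π (a ⨯₃ b) = wedge R M (π a) (π b) := by
  have hπ : ∀ v, π v = v 0 • π (Pi.single 0 1) + v 1 • π (Pi.single 1 1) +
      v 2 • π (Pi.single 2 1) := fun v => by
    conv_lhs => rw [pi_eq_sum_univ' v]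
    simp [Fin.sum_univ_three]
  rw [hπ a, hπ b, crossToWedge, Fintype.linearCombination_apply, Fin.sum_univ_three]
  simp only [map_add, map_smul, LinearMap.add_apply, LinearMap.smul_apply, wedge_self,
    cross_apply, Matrix.cons_val]
  set e := fun i : Fin 3 => π (Pi.single i 1)
  change (_ • wedge R M (e 1) (e 2) + _ • wedge R M (e 2) (e 0) + _ • wedge R M (e 0) (e 1)) =
    b 0 • (_ + a 1 • wedge R M (e 1) (e 0) + a 2 • wedge R M (e 2) (e 0)) +
    b 1 • (a 0 • wedge R M (e 0) (e 1) + _ + a 2 • wedge R M (e 2) (e 1)) +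
    b 2 • (a 0 • wedge R M (e 0) (e 2) + a 1 • wedge R M (e 1) (e 2) + _)
  rw [wedge_swap (e 1) (e 0), wedge_swap (e 2) (e 1), wedge_swap (e 0) (e 2)]
  module

/-- The cross product on `R³ / (g)`, with values in the cokernel of `g ⨯₃ ·`. -/
noncomputable def crossQuotient (g : Fin 3 → R) :
    ((Fin 3 → R) ⧸ (R ∙ g)) →ₗ[R] ((Fin 3 → R) ⧸ (R ∙ g)) →ₗ[R]
      ((Fin 3 → R) ⧸ koszulCoboundaries g) :=
  (crossProduct.compr₂ (koszulCoboundaries g).mkQ).liftQ₂ (R ∙ g) (R ∙ g)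
    (by
      rw [Submodule.span_singleton_le_iff_mem, LinearMap.mem_ker]
      refine LinearMap.ext fun v => ?_
      rw [LinearMap.compr₂_apply, LinearMap.zero_apply, Submodule.mkQ_apply,
        Submodule.Quotient.mk_eq_zero]
      exact mem_koszulCoboundaries.2 ⟨v, rfl⟩)
    (by
      rw [Submodule.span_singleton_le_iff_mem, LinearMap.mem_ker]
      refine LinearMap.ext fun v => ?_
      rw [LinearMap.flip_apply, LinearMap.compr₂_apply, LinearMap.zero_apply,
        Submodule.mkQ_apply, Submodule.Quotient.mk_eq_zero]
      refine mem_koszulCoboundaries.2 ⟨-v, ?_⟩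
      rw [map_neg, cross_anticomm])

theorem crossQuotient_mkQ (g a b : Fin 3 → R) :
    crossQuotient g ((R ∙ g).mkQ a) ((R ∙ g).mkQ b) = (koszulCoboundaries g).mkQ (a ⨯₃ b) := rfl

theorem crossQuotient_self (g : Fin 3 → R) (x : (Fin 3 → R) ⧸ (R ∙ g)) :
    crossQuotient g x x = 0 := by
  obtain ⟨a, rfl⟩ := (R ∙ g).mkQ_surjective x
  rw [crossQuotient_mkQ, cross_self, map_zero]

/-- The linear map out of the exterior square given by an alternating bilinear map. -/
noncomputable def wedgeLift {N : Type*} [AddCommGroup N] [Module R N] (B : M →ₗ[R] M →ₗ[R] N)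
    (hB : ∀ x, B x x = 0) : ⋀[R]^2 M →ₗ[R] N :=
  exteriorPower.alternatingMapLinearEquiv
    { toFun := fun v => B (v 0) (v 1)
      map_update_add' := fun v i x y => by fin_cases i <;> simp
      map_update_smul' := fun v i c x => by fin_cases i <;> simp
      map_eq_zero_of_eq' := fun v i j h hij => by
        fin_cases i <;> fin_cases j <;> simp_all }

theorem wedgeLift_wedge {N : Type*} [AddCommGroup N] [Module R N] (B : M →ₗ[R] M →ₗ[R] N)
    (hB : ∀ x, B x x = 0) (x y : M) : wedgeLift B hB (wedge R M x y) = B x y := by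
  rw [wedgeLift, wedge_apply, exteriorPower.alternatingMapLinearEquiv_apply_ιMulti]
  rfl

theorem exteriorSquare_ext {N : Type*} [AddCommGroup N] [Module R N] {φ ψ : ⋀[R]^2 M →ₗ[R] N}
    (h : ∀ x y, φ (wedge R M x y) = ψ (wedge R M x y)) : φ = ψ := by
  refine exteriorPower.linearMap_ext (AlternatingMap.ext fun v => ?_)
  have hv : v = ![v 0, v 1] := by ext i; fin_cases i <;> rfl
  rw [hv]
  exact h _ _

variable {g : Fin 3 → R} (E : ((Fin 3 → R) ⧸ (R ∙ g)) ≃ₗ[R] M)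

/-- The map from the exterior square of `R³ / (g)` induced by the cross product. -/
noncomputable def wedgeToCross : ⋀[R]^2 M →ₗ[R] ((Fin 3 → R) ⧸ koszulCoboundaries g) :=
  wedgeLift ((crossQuotient g).compl₁₂ E.symm.toLinearMap E.symm.toLinearMap) fun x => by
    rw [LinearMap.compl₁₂_apply, crossQuotient_self]

theorem wedgeToCross_wedge (a b : Fin 3 → R) :
    wedgeToCross E (wedge R M (E ((R ∙ g).mkQ a)) (E ((R ∙ g).mkQ b))) =
      (koszulCoboundaries g).mkQ (a ⨯₃ b) := by
  rw [wedgeToCross, wedgeLift_wedge, LinearMap.compl₁₂_apply, LinearEquiv.coe_coe,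
    LinearEquiv.symm_apply_apply, LinearEquiv.symm_apply_apply, crossQuotient_mkQ]

theorem koszulCoboundaries_le_ker_crossToWedge :
    koszulCoboundaries g ≤ LinearMap.ker (crossToWedge (E.toLinearMap ∘ₗ (R ∙ g).mkQ)) := by
  intro v hv
  obtain ⟨w, rfl⟩ := mem_koszulCoboundaries.1 hv
  rw [LinearMap.mem_ker, crossToWedge_cross, LinearMap.comp_apply, Submodule.mkQ_apply,
    (Submodule.Quotient.mk_eq_zero _).2 (Submodule.mem_span_singleton_self g), map_zero, map_zero,
    LinearMap.zero_apply]

/-- The exterior square of `R³ / (g)` is the cokernel of `g ⨯₃ ·`. -/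
noncomputable def exteriorSquareEquiv : ⋀[R]^2 M ≃ₗ[R] ((Fin 3 → R) ⧸ koszulCoboundaries g) :=
  LinearEquiv.ofLinearMap (wedgeToCross E)
    ((koszulCoboundaries g).liftQ _ (koszulCoboundaries_le_ker_crossToWedge E))
    (by
      refine Submodule.linearMap_qext _ (LinearMap.pi_ext' fun i => LinearMap.ext_ring ?_)
      have hi : (Pi.single i 1 : Fin 3 → R) = Pi.single (i + 1) 1 ⨯₃ Pi.single (i + 2) 1 := by
        ext j
        rw [cross_apply_cyclic]
        fin_cases i <;> fin_cases j <;> simp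
      simp only [LinearMap.comp_apply, LinearMap.single_apply, LinearMap.id_apply]
      rw [hi, Submodule.mkQ_apply, Submodule.liftQ_apply, crossToWedge_cross]
      exact wedgeToCross_wedge E _ _)
    (by
      refine exteriorSquare_ext fun x y => ?_
      obtain ⟨x, rfl⟩ := E.surjective x
      obtain ⟨y, rfl⟩ := E.surjective y
      obtain ⟨a, rfl⟩ := (R ∙ g).mkQ_surjective x
      obtain ⟨b, rfl⟩ := (R ∙ g).mkQ_surjective y
      rw [LinearMap.comp_apply, wedgeToCross_wedge, Submodule.mkQ_apply, Submodule.liftQ_apply,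
        crossToWedge_cross]
      rfl)

end ExteriorSquare

section Ext

open Matrix

universe u

variable {R : Type u} [CommRing R] (g : Fin 3 → R)

/-- The modules of the Koszul resolution of the cokernel of `g ⨯₃ ·`. -/
noncomputable def koszulX : ℕ → ModuleCat.{u} R
  | 0 => ModuleCat.of R (Fin 3 → R)
  | 1 => ModuleCat.of R (Fin 3 → R)
  | 2 => ModuleCat.of R R
  | _ + 3 => ModuleCat.of R PUnit

/-- The differentials of the Koszul resolution of the cokernel of `g ⨯₃ ·`. -/
noncomputable def koszulD : ∀ n : ℕ, koszulX (R := R) (n + 1) ⟶ koszulX n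
  | 0 => ModuleCat.ofHom (crossProduct.flip g)
  | 1 => ModuleCat.ofHom (LinearMap.toSpanSingleton R (Fin 3 → R) g)
  | _ + 2 => 0

theorem koszulD_comp : ∀ n : ℕ, koszulD g (n + 1) ≫ koszulD g n = 0
  | 0 => by
    refine ModuleCat.hom_ext (LinearMap.ext_ring ?_)
    change crossProduct.flip g ((1 : R) • g) = (0 : Fin 3 → R)
    rw [one_smul, LinearMap.flip_apply, cross_self]
  | _ + 1 => Limits.zero_comp

/-- The part of the Koszul complex of `g` resolving the cokernel of `g ⨯₃ ·`. -/
noncomputable def koszulComplex : ChainComplex (ModuleCat.{u} R) ℕ :=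
  ChainComplex.of koszulX (koszulD g) (koszulD_comp g)

instance projective_koszulX : ∀ n : ℕ, Projective (koszulX (R := R) n)
  | 0 => inferInstanceAs (Projective (ModuleCat.of R (Fin 3 → R)))
  | 1 => inferInstanceAs (Projective (ModuleCat.of R (Fin 3 → R)))
  | 2 => inferInstanceAs (Projective (ModuleCat.of R R))
  | _ + 3 => inferInstanceAs (Projective (ModuleCat.of R PUnit))

theorem koszulComplex_d (n : ℕ) : (koszulComplex g).d (n + 1) n = koszulD g n :=
  ChainComplex.of_d ..

variable {g}

theorem koszulComplex_exactAt [IsDomain R] (hg : g ≠ 0)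
    (hex : ∀ v, g ⨯₃ v = 0 → ∃ u : R, v = u • g) :
    ∀ n, (koszulComplex g).ExactAt (n + 1) := by
  intro n
  rw [HomologicalComplex.exactAt_iff' _ (n + 2) (n + 1) n (by simp) (by simp),
    ShortComplex.moduleCat_exact_iff]
  change ∀ x, ((koszulComplex g).d (n + 1) n).hom x = 0 →
    ∃ y, ((koszulComplex g).d (n + 1 + 1) (n + 1)).hom y = x
  rw [koszulComplex_d, koszulComplex_d]
  match n with
  | 0 =>
    intro (x : Fin 3 → R) hx
    change x ⨯₃ g = 0 at hx
    rw [← cross_anticomm, neg_eq_zero] at hx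
    obtain ⟨u, rfl⟩ := hex x hx
    exact ⟨u, rfl⟩
  | 1 =>
    intro (x : R) (hx : x • g = 0)
    exact ⟨0, by rw [map_zero]; exact ((smul_eq_zero_iff_left hg).1 hx).symm⟩
  | n + 2 => exact fun x _ => ⟨0, Subsingleton.elim (α := PUnit) _ _⟩

/-- The Koszul complex is a projective resolution of the cokernel of `g ⨯₃ ·`. -/
noncomputable def koszulResolution [IsDomain R] (hg : g ≠ 0)
    (hex : ∀ v, g ⨯₃ v = 0 → ∃ u : R, v = u • g) {N : ModuleCat.{u} R}
    (p : (Fin 3 → R) →ₗ[R] N) (hp : Function.Surjective p)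
    (hker : LinearMap.ker p = koszulCoboundaries g) : ProjectiveResolution N where
  complex := koszulComplex g
  projective := projective_koszulX
  π := (ChainComplex.toSingle₀Equiv _ _).symm ⟨ModuleCat.ofHom p, by
    rw [koszulComplex_d]
    refine ModuleCat.hom_ext (LinearMap.ext fun (w : Fin 3 → R) => ?_)
    change p (w ⨯₃ g) = 0
    rw [← LinearMap.mem_ker, hker, mem_koszulCoboundaries]
    exact ⟨-w, by rw [map_neg, cross_anticomm]⟩⟩
  quasiIso := ⟨fun n => by
    cases n with
    | zero =>
      rw [ChainComplex.quasiIsoAt₀_iff, ShortComplex.quasiIso_iff_of_zeros']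
      · constructor
        · rw [ShortComplex.moduleCat_exact_iff]
          intro (x : Fin 3 → R) (hx : p x = 0)
          rw [← LinearMap.mem_ker, hker, mem_koszulCoboundaries] at hx
          obtain ⟨w, rfl⟩ := hx
          refine ⟨-w, ?_⟩
          change ((koszulComplex g).d 1 0).hom (-w) = _
          rw [koszulComplex_d]
          change (-w) ⨯₃ g = _
          rw [map_neg, LinearMap.neg_apply, cross_anticomm]
        · rw [ModuleCat.epi_iff_surjective]
          exact hp
      all_goals rfl
    | succ n =>
      rw [quasiIsoAt_iff_exactAt']
      · exact koszulComplex_exactAt hg hex n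
      · apply ChainComplex.exactAt_succ_single_obj⟩

variable (g) in
/-- The short complex of modules computing the second Koszul cohomology of `g`. -/
noncomputable def koszulShortComplex : ShortComplex (ModuleCat.{u} R) :=
  ShortComplex.mk (ModuleCat.ofHom (crossProduct g))
    (ModuleCat.ofHom (dotProductEquiv R (Fin 3) g)) (by
      ext1
      exact LinearMap.ext fun w => dot_self_cross g w)

/-- Linear functionals on `R³` are vectors. -/
noncomputable def homPiIso : ModuleCat.of R (ModuleCat.of R (Fin 3 → R) ⟶ ModuleCat.of R R) ≅
    ModuleCat.of R (Fin 3 → R) :=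
  (ModuleCat.homLinearEquiv (S := R).trans (dotProductEquiv R (Fin 3)).symm).toModuleIso

/-- Linear functionals on `R` are scalars. -/
noncomputable def homRingIso : ModuleCat.of R (ModuleCat.of R R ⟶ ModuleCat.of R R) ≅
    ModuleCat.of R R :=
  (ModuleCat.homLinearEquiv (S := R).trans (LinearMap.ringLmapEquivSelf R R R)).toModuleIso

variable (g) in
/-- The dual of the Koszul resolution is the Koszul complex. -/
noncomputable def koszulDualIso :
    ((koszulComplex g).linearYonedaObj R (ModuleCat.of R R)).sc' 0 1 2 ≅ koszulShortComplex g :=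
  ShortComplex.isoMk homPiIso homPiIso homRingIso
    (by
      refine ModuleCat.hom_ext (LinearMap.ext fun (φ : ModuleCat.of R (Fin 3 → R) ⟶ _) => ?_)
      obtain ⟨v, hv⟩ := (dotProductEquiv R (Fin 3)).surjective φ.hom
      refine (LinearEquiv.eq_symm_apply (dotProductEquiv R (Fin 3))).2
        (LinearMap.ext fun (w : Fin 3 → R) => Eq.trans ?_
          (congrArg (fun d => (d ≫ φ).hom w) (koszulComplex_d g 0)).symm)
      change (g ⨯₃ (dotProductEquiv R (Fin 3)).symm φ.hom) ⬝ᵥ w = φ.hom (w ⨯₃ g)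
      rw [← hv, LinearEquiv.symm_apply_apply]
      change (g ⨯₃ v) ⬝ᵥ w = v ⬝ᵥ w ⨯₃ g
      rw [dotProduct_comm, triple_product_permutation, triple_product_permutation])
    (by
      refine ModuleCat.hom_ext (LinearMap.ext fun (φ : ModuleCat.of R (Fin 3 → R) ⟶ _) => ?_)
      obtain ⟨v, hv⟩ := (dotProductEquiv R (Fin 3)).surjective φ.hom
      refine Eq.trans ?_ (congrArg (fun d => (d ≫ φ).hom (1 : R)) (koszulComplex_d g 1)).symm
      change g ⬝ᵥ (dotProductEquiv R (Fin 3)).symm φ.hom = φ.hom ((1 : R) • g)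
      rw [← hv, LinearEquiv.symm_apply_apply]
      change g ⬝ᵥ v = v ⬝ᵥ ((1 : R) • g)
      rw [one_smul, dotProduct_comm])

/-- `Ext¹` of the cokernel of `g ⨯₃ ·` is the second Koszul cohomology of `g`. -/
noncomputable def extEquivKoszulH2 [IsDomain R] (hg : g ≠ 0)
    (hex : ∀ v, g ⨯₃ v = 0 → ∃ u : R, v = u • g) {N : ModuleCat.{u} R}
    (E : N ≃ₗ[R] (Fin 3 → R) ⧸ koszulCoboundaries g) :
    (((Ext R (ModuleCat.{u} R) 1).obj (op N)).obj (ModuleCat.of R R)) ≃ₗ[R] KoszulH2 g :=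
  (((koszulResolution hg hex (E.symm.toLinearMap ∘ₗ (koszulCoboundaries g).mkQ)
      (E.symm.surjective.comp (koszulCoboundaries g).mkQ_surjective)
      (by rw [LinearEquiv.ker_comp, Submodule.ker_mkQ])).isoExt 1 (ModuleCat.of R R)) ≪≫
    ShortComplex.homologyMapIso (HomologicalComplex.isoSc' _ 0 1 2 (by simp) (by simp) ≪≫
      koszulDualIso g) ≪≫
    (koszulShortComplex g).moduleCatHomologyIso).toLinearEquiv.trans
    (Submodule.quotEquivOfEq _ _ (by
      ext ⟨v, hv⟩
      constructor
      · rintro ⟨w, hw⟩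
        exact ⟨w, congrArg Subtype.val hw⟩
      · rintro ⟨w, hw⟩
        exact ⟨w, Subtype.ext hw⟩))

end Ext

theorem moduleLength_eq_of_length_eq {R M N : Type} [CommRing R] [AddCommGroup M] [Module R M]
    [AddCommGroup N] [Module R N] (h : Module.length R M = Module.length R N) :
    moduleLength R M = moduleLength R N := by
  rw [moduleLength, moduleLength, ← Module.coe_length, ← Module.coe_length, h]

/-- A linear equivalence restricts to the torsion submodules. -/
noncomputable def LinearEquiv.torsionCongr {R M N : Type*} [CommRing R] [AddCommGroup M]
    [Module R M] [AddCommGroup N] [Module R N] (E : M ≃ₗ[R] N) :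
    Submodule.torsion R M ≃ₗ[R] Submodule.torsion R N :=
  E.ofSubmodules _ _ <| by
    ext y
    obtain ⟨x, rfl⟩ := E.surjective y
    rw [Submodule.mem_map_equiv, LinearEquiv.symm_apply_apply, Submodule.mem_torsion_iff,
      Submodule.mem_torsion_iff]
    refine exists_congr fun a => ?_
    change (a : R) • x = 0 ↔ (a : R) • E x = 0
    rw [← map_smul, E.map_eq_zero_iff]

/-- Let `R = F[x,y,z]/(f)` be a 2-dimensional isolated hypersurface singularity over a
field `F` of characteristic zero, with Tjurina number `τ` (the length of `R ⧸ J`, where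
`J` is the Jacobian ideal).  Then the torsion submodule of `Ω²_{R/F}` is isomorphic to
`Ext¹_R(Ω²_{R/F}, R)`, and both have length `τ`. -/
theorem torsion_omega2_iso_ext1 (F : Type) [Field F] [CharZero F]
    (f : MvPolynomial (Fin 3) F) (hf : Prime f)
    (R : Type) [CommRing R] (e : (MvPolynomial (Fin 3) F ⧸ Ideal.span {f}) ≃+* R)
    [Algebra F R] (halg : ∀ c : F, algebraMap F R c = e (algebraMap F _ c))
    (J : Ideal R)
    (hJ : J = Ideal.span {e (Ideal.Quotient.mk _ (pderiv 0 f)),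
      e (Ideal.Quotient.mk _ (pderiv 1 f)), e (Ideal.Quotient.mk _ (pderiv 2 f))})
    (hisolated : IsFiniteLength R (R ⧸ J)) :
    Nonempty
      ((Submodule.torsion R (⋀[R]^2 (Ω[R⁄F]) : Submodule R _)) ≃ₗ[R]
        (((Ext R (ModuleCat R) 1).obj (op (ModuleCat.of R (⋀[R]^2 (Ω[R⁄F]))))).obj
          (ModuleCat.of R R))) ∧
    moduleLength R (Submodule.torsion R (⋀[R]^2 (Ω[R⁄F]) : Submodule R _)) =
      moduleLength R (R ⧸ J) ∧
    moduleLength R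
        (((Ext R (ModuleCat R) 1).obj (op (ModuleCat.of R (⋀[R]^2 (Ω[R⁄F]))))).obj
          (ModuleCat.of R R)) = moduleLength R (R ⧸ J) := by
  let σ : MvPolynomial (Fin 3) F →ₐ[F] R :=
    { (e : _ →+* R).comp (Ideal.Quotient.mk (Ideal.span {f})) with
      commutes' := fun c => (halg c).symm }
  have hσ : Function.Surjective σ := e.surjective.comp Ideal.Quotient.mk_surjective
  have hker : RingHom.ker σ = Ideal.span {f} := by
    ext p
    rw [RingHom.mem_ker, ← Ideal.Quotient.eq_zero_iff_mem]
    exact map_eq_zero_iff e e.injective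
  have hprime : (Ideal.span {f}).IsPrime := (Ideal.span_singleton_prime hf.ne_zero).2 hf
  have : IsDomain R := e.symm.toMulEquiv.isDomain _
  have hJ' : J = Ideal.span (Set.range (gradientAlong σ f)) := by
    rw [hJ]
    congr 1
    ext r
    simp only [Set.mem_insert_iff, Set.mem_singleton_iff, Set.mem_range, Fin.exists_fin_succ,
      Fin.exists_fin_zero, or_false, eq_comm (a := r)]
    rfl
  subst hJ'
  obtain ⟨i, t, hi, hreg, hfin⟩ := exists_regular_pair hf hσ hker _ hisolated
  have hg : gradientAlong σ f ≠ 0 := fun h => hi (congrFun h i)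
  have E := exteriorSquareEquiv (kaehlerEquiv hσ hker)
  have eTors := (E.torsionCongr).trans (torsionEquivKoszulH2 hg)
  have eExt := extEquivKoszulH2 hg (fun v hv => exists_eq_smul_of_cross_eq_zero hi hreg hv)
    (N := ModuleCat.of R (⋀[R]^2 (Ω[R⁄F]))) E
  have hlen := length_koszulH2 hi hreg hfin
  exact ⟨⟨eTors.trans eExt.symm⟩, moduleLength_eq_of_length_eq (eTors.length_eq.trans hlen),
    moduleLength_eq_of_length_eq (eExt.length_eq.trans hlen)⟩
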